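/- Let u : ℝ → ℝ → ℝ be a smooth function of (x,t) with u(x,t) ≠ 0 for all (x,t), satisfying the 2nd potential Kupershmidt equation u_t = u_{5x} - 5·u_{xx}u_{4x}/u_x - (15/4)·u_{xxx}²/u_x + (65/4)·u_{xx}²u_{xxx}/u_x² - (135/16)·u_{xx}⁴/u_x³, with u_x(x,t) ≠ 0 for all (x,t). Then for any constant c ∈ ℝ, the function ū(x,t) := -1/u(x,t) + c also satisfies the 2nd potential Kupershmidt equation ū_t = ū_{5x} - 5·ū_{xx}ū_{4x}/ū_x - (15/4)·ū_{xxx}²/ū_x + (65/4)·ū_{xx}²ū_{xxx}/ū_x² - (135/16)·ū_{xx}⁴/ū_x³. -/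

import Mathlib

/-!
With the Schwarzian derivative `S = u₃ / u₁ - (3 / 2) (u₂ / u₁)²`, the right-hand side of the
equation equals `u₁ (Sₓₓ + S² / 4)`. Both `S` and `u_t / u_x` are unchanged when `u` is replaced
by `-1 / u + c`, a Möbius transform of `u`, so the equation is invariant.

The proof below verifies this invariance by direct computation: the first five `x`-derivatives
of `-1 / u + c` are expressed through those of `u` (`dx_inv_one`, …, `dx_inv_five`), and after
substitution the new equation is the old one divided by `u²`.
-/

/-- Total `x`-derivative of a function of `(x, t)`. -/
noncomputable def dx (f : ℝ → ℝ → ℝ) : ℝ → ℝ → ℝ := fun x t => deriv (fun y => f y t) x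

/-- Total `t`-derivative of a function of `(x, t)`. -/
noncomputable def dt (f : ℝ → ℝ → ℝ) : ℝ → ℝ → ℝ := fun x t => deriv (fun s => f x s) t

/-- The 2nd potential Kupershmidt equation. -/
def Kup2 (u : ℝ → ℝ → ℝ) : Prop :=
  ∀ x t, dt u x t =
    dx (dx (dx (dx (dx u)))) x t
    - 5 * dx (dx u) x t * dx (dx (dx (dx u))) x t / dx u x t
    - (15/4) * (dx (dx (dx u)) x t)^2 / dx u x t
    + (65/4) * (dx (dx u) x t)^2 * dx (dx (dx u)) x t / (dx u x t)^2
    - (135/16) * (dx (dx u) x t)^4 / (dx u x t)^3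

/-- Smoothness of the `x`-slices passes to `dx f`. -/
lemma contDiff_dx_slice {f : ℝ → ℝ → ℝ}
    (hf : ∀ t, ContDiff ℝ (⊤ : ℕ∞) (fun y => f y t)) (t : ℝ) :
    ContDiff ℝ (⊤ : ℕ∞) (fun y => dx f y t) :=
  (contDiff_infty_iff_deriv.1 (hf t)).2

lemma hasDerivAt_dx {f : ℝ → ℝ → ℝ}
    (hf : ∀ t, ContDiff ℝ (⊤ : ℕ∞) (fun y => f y t)) (x t : ℝ) :
    HasDerivAt (fun y => f y t) (dx f x t) x :=
  ((contDiff_infty_iff_deriv.1 (hf t)).1 x).hasDerivAt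

section Derivatives

variable {u u₁ u₂ u₃ u₄ u₅ : ℝ → ℝ → ℝ}

lemma dx_inv_one (hne : ∀ x t, u x t ≠ 0)
    (h₀ : ∀ x t, HasDerivAt (fun y => u y t) (u₁ x t) x) (c : ℝ) :
    dx (fun x t => -1 / u x t + c) = fun x t => u₁ x t / u x t ^ 2 := by
  funext x t
  have hx := hne x t
  refine HasDerivAt.deriv ((((hasDerivAt_const x (-1 : ℝ)).div (h₀ x t) hx).add_const c).congr_deriv
    ?_)
  field_simp
  ring

lemma dx_inv_two (hne : ∀ x t, u x t ≠ 0)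
    (h₀ : ∀ x t, HasDerivAt (fun y => u y t) (u₁ x t) x)
    (h₁ : ∀ x t, HasDerivAt (fun y => u₁ y t) (u₂ x t) x) :
    dx (fun x t => u₁ x t / u x t ^ 2) =
      fun x t => (u₂ x t * u x t - 2 * u₁ x t ^ 2) / u x t ^ 3 := by
  funext x t
  have hx := hne x t
  refine HasDerivAt.deriv (((h₁ x t).div ((h₀ x t).pow 2) (pow_ne_zero 2 hx)).congr_deriv ?_)
  simp only [Pi.pow_apply]
  field_simp
  push_cast
  ring

lemma dx_inv_three (hne : ∀ x t, u x t ≠ 0)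
    (h₀ : ∀ x t, HasDerivAt (fun y => u y t) (u₁ x t) x)
    (h₁ : ∀ x t, HasDerivAt (fun y => u₁ y t) (u₂ x t) x)
    (h₂ : ∀ x t, HasDerivAt (fun y => u₂ y t) (u₃ x t) x) :
    dx (fun x t => (u₂ x t * u x t - 2 * u₁ x t ^ 2) / u x t ^ 3) =
      fun x t => (u₃ x t * u x t ^ 2 - 6 * u₁ x t * u₂ x t * u x t + 6 * u₁ x t ^ 3)
        / u x t ^ 4 := by
  funext x t
  have hx := hne x t
  refine HasDerivAt.deriv (((((h₂ x t).mul (h₀ x t)).sub (((h₁ x t).pow 2).const_mul 2)).div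
    ((h₀ x t).pow 3) (pow_ne_zero 3 hx)).congr_deriv ?_)
  simp only [Pi.pow_apply, Pi.mul_apply, Pi.sub_apply]
  field_simp
  push_cast
  ring

lemma dx_inv_four (hne : ∀ x t, u x t ≠ 0)
    (h₀ : ∀ x t, HasDerivAt (fun y => u y t) (u₁ x t) x)
    (h₁ : ∀ x t, HasDerivAt (fun y => u₁ y t) (u₂ x t) x)
    (h₂ : ∀ x t, HasDerivAt (fun y => u₂ y t) (u₃ x t) x)
    (h₃ : ∀ x t, HasDerivAt (fun y => u₃ y t) (u₄ x t) x) :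
    dx (fun x t => (u₃ x t * u x t ^ 2 - 6 * u₁ x t * u₂ x t * u x t + 6 * u₁ x t ^ 3)
        / u x t ^ 4) =
      fun x t => (u₄ x t * u x t ^ 3 - 8 * u₁ x t * u₃ x t * u x t ^ 2
        - 6 * u₂ x t ^ 2 * u x t ^ 2 + 36 * u₁ x t ^ 2 * u₂ x t * u x t - 24 * u₁ x t ^ 4)
        / u x t ^ 5 := by
  funext x t
  have hx := hne x t
  refine HasDerivAt.deriv ((((((h₃ x t).mul ((h₀ x t).pow 2)).sub
    ((((h₁ x t).const_mul 6).mul (h₂ x t)).mul (h₀ x t))).add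
    (((h₁ x t).pow 3).const_mul 6)).div
    ((h₀ x t).pow 4) (pow_ne_zero 4 hx)).congr_deriv ?_)
  simp only [Pi.pow_apply, Pi.mul_apply, Pi.sub_apply, Pi.add_apply]
  field_simp
  push_cast
  ring

lemma dx_inv_five (hne : ∀ x t, u x t ≠ 0)
    (h₀ : ∀ x t, HasDerivAt (fun y => u y t) (u₁ x t) x)
    (h₁ : ∀ x t, HasDerivAt (fun y => u₁ y t) (u₂ x t) x)
    (h₂ : ∀ x t, HasDerivAt (fun y => u₂ y t) (u₃ x t) x)
    (h₃ : ∀ x t, HasDerivAt (fun y => u₃ y t) (u₄ x t) x)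
    (h₄ : ∀ x t, HasDerivAt (fun y => u₄ y t) (u₅ x t) x) :
    dx (fun x t => (u₄ x t * u x t ^ 3 - 8 * u₁ x t * u₃ x t * u x t ^ 2
        - 6 * u₂ x t ^ 2 * u x t ^ 2 + 36 * u₁ x t ^ 2 * u₂ x t * u x t - 24 * u₁ x t ^ 4)
        / u x t ^ 5) =
      fun x t => (u₅ x t * u x t ^ 4 - 10 * u₁ x t * u₄ x t * u x t ^ 3
        - 20 * u₂ x t * u₃ x t * u x t ^ 3 + 60 * u₁ x t ^ 2 * u₃ x t * u x t ^ 2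
        + 90 * u₁ x t * u₂ x t ^ 2 * u x t ^ 2 - 240 * u₁ x t ^ 3 * u₂ x t * u x t
        + 120 * u₁ x t ^ 5) / u x t ^ 6 := by
  funext x t
  have hx := hne x t
  refine HasDerivAt.deriv ((((((((h₄ x t).mul ((h₀ x t).pow 3)).sub
    ((((h₁ x t).const_mul 8).mul (h₃ x t)).mul ((h₀ x t).pow 2))).sub
    ((((h₂ x t).pow 2).const_mul 6).mul ((h₀ x t).pow 2))).add
    (((((h₁ x t).pow 2).const_mul 36).mul (h₂ x t)).mul (h₀ x t))).sub
    (((h₁ x t).pow 4).const_mul 24)).div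
    ((h₀ x t).pow 5) (pow_ne_zero 5 hx)).congr_deriv ?_)
  simp only [Pi.pow_apply, Pi.mul_apply, Pi.sub_apply, Pi.add_apply]
  field_simp
  push_cast
  ring

end Derivatives

/-- Invariance of the 2nd potential Kupershmidt equation under `u ↦ -1/u + c`. -/
theorem kup2_invariance_inverse
    (u : ℝ → ℝ → ℝ)
    (hu : ContDiff ℝ (⊤ : ℕ∞) (fun p : ℝ × ℝ => u p.1 p.2))
    (hne : ∀ x t, u x t ≠ 0)
    (hux : ∀ x t, dx u x t ≠ 0)
    (heq : Kup2 u) (c : ℝ) :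
    Kup2 (fun x t => -1 / u x t + c) := by
  have c₀ : ∀ t, ContDiff ℝ (⊤ : ℕ∞) (fun y => u y t) := fun t =>
    hu.comp (contDiff_id.prodMk contDiff_const)
  have c₁ := contDiff_dx_slice c₀
  have c₂ := contDiff_dx_slice c₁
  have c₃ := contDiff_dx_slice c₂
  have c₄ := contDiff_dx_slice c₃
  have h₀ := hasDerivAt_dx c₀
  have h₁ := hasDerivAt_dx c₁
  have h₂ := hasDerivAt_dx c₂
  have h₃ := hasDerivAt_dx c₃
  have h₄ := hasDerivAt_dx c₄
  intro x t
  have ht : dt (fun x t => -1 / u x t + c) x t = dt u x t / u x t ^ 2 := by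
    have hc : ContDiff ℝ (⊤ : ℕ∞) (fun s => u x s) :=
      hu.comp (contDiff_const.prodMk contDiff_id)
    have hd : HasDerivAt (fun s => u x s) (dt u x t) t :=
      ((contDiff_infty_iff_deriv.1 hc).1 t).hasDerivAt
    have hx := hne x t
    refine HasDerivAt.deriv ((((hasDerivAt_const t (-1 : ℝ)).div hd hx).add_const c).congr_deriv
      ?_)
    field_simp
    ring
  rw [ht, dx_inv_one hne h₀ c, dx_inv_two hne h₀ h₁, dx_inv_three hne h₀ h₁ h₂,
    dx_inv_four hne h₀ h₁ h₂ h₃, dx_inv_five hne h₀ h₁ h₂ h₃ h₄, heq x t]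
  have hx := hne x t
  have hx₁ := hux x t
  beta_reduce
  generalize dx (dx (dx (dx (dx u)))) x t = a₅
  generalize dx (dx (dx (dx u))) x t = a₄
  generalize dx (dx (dx u)) x t = a₃
  generalize dx (dx u) x t = a₂
  generalize dx u x t = a₁ at *
  generalize u x t = a at *
  field_simp
  ring
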